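/- Let n ≥ 2, L ≥ 2, ν ∈ {0,1}, and let -1 < β_L < … < β₁ < 1 be such that Π_L(t) := ∏_{i=1}^{L}(t-β_i) is orthogonal to all polynomials of degree ≤ L-2 with respect to the weight v_{1,ν}(t) on [-1,1]. Then for every k = 2,…,L, the polynomial ∏_{i=k}^{L}(t-β_i) equals ∑_{j=0}^{L-k+1} c_j P_j^{1,ν}(t) with all c_j ≥ 0, and the polynomial ∏_{i=2}^{L}(t-β_i) · ∏_{i=k}^{L}(t-β_i) equals ∑_{j=0}^{2L-k} d_j P_j^{1,ν}(t) with all d_j ≥ 0. -/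

import Mathlib

/-!
Two facts about orthogonal polynomials carry the proof; both are consequences of the three-term
recurrence `P_{k+2} = (t - b_{k+1}) P_{k+1} - a_k P_k`.

*Partial products* (`inCone_prod_range`, a result of Cohn and Kumar). Orthogonality of `Π_L` to
degree `≤ L - 2` gives `Π_L = P_L + α P_{L-1}`, so `P_0, …, P_{L-1}, Π_L` again satisfy a
three-term recurrence with positive off-diagonal coefficients. Dividing out the largest zero `c` of
the last polynomial by the Christoffel transform
`q_j = (p_{j+1} - (p_{j+1}(c) / p_j(c)) p_j) / (t - c)` produces a shorter sequence of the same
kind, which ends with `Π_L / (t - c)` and whose members are non-negative combinations of the `p_j`.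
Positivity of `p_j(c)` comes from the ordering of the largest zeros. Iterating yields every
partial product over the smallest zeros.

*Linearization* (`askey`). If `a_k` and `b_k` are non-decreasing and `a_k ≥ 0`, then every product
`P_i P_j` is a non-negative combination of the `P_k`. With the first fact this settles the second
family of products.

The monotonicity is checked on explicit coefficients. The weight `v_{1,b}` is the Jacobi weight
with parameters `((n-1)/2, b - 1/2)`. Under `t = 2x² - 1` its orthogonal polynomials become
Gegenbauer polynomials of parameter `λ = n/2 ≥ 1` of parity `b`, and `a_k`, `b_k` are products and
sums of consecutive Gegenbauer recurrence coefficients (`geg`), which are non-decreasing because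
`λ ≥ 1`. That these are the coefficients (`jacobi_rec`) follows from the Jacobi differential
equation, which determines the second and third coefficients of `P_k`; the differential equation
in turn follows from the Pearson equation of the weight, an integration by parts (`ell_pearson`).
-/

open MeasureTheory Polynomial

noncomputable section

/-- The weight `v_{a,b}(t) = (1+t)^{b-1/2} (1-t)^{a+(n-3)/2}`. -/
def vw (n a b : ℕ) (t : ℝ) : ℝ :=
  (1 + t) ^ ((b : ℝ) - 1 / 2) * (1 - t) ^ ((a : ℝ) + ((n : ℝ) - 3) / 2)

/-- `P` is the family of monic orthogonal polynomials with respect to `v_{a,b}` on `[-1,1]`,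
with `deg P_k = k`. -/
def IsMonicOrth (n a b : ℕ) (P : ℕ → Polynomial ℝ) : Prop :=
  ∀ k, (P k).Monic ∧ (P k).natDegree = k ∧
    ∀ q : Polynomial ℝ, q.natDegree < k →
      ∫ t in Set.Ioo (-1 : ℝ) 1, (P k).eval t * q.eval t * vw n a b t = 0

/-! ### Non-negative combinations -/

/-- `InCone p d f`: `f` is a combination of `p 0, …, p d` with non-negative coefficients. -/
def InCone (p : ℕ → ℝ[X]) (d : ℕ) (f : ℝ[X]) : Prop :=
  ∃ c : ℕ → ℝ, (∀ j, 0 ≤ c j) ∧ f = ∑ j ∈ Finset.range (d + 1), C (c j) * p j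

namespace InCone

variable {p q : ℕ → ℝ[X]} {d e : ℕ} {f g : ℝ[X]}

lemma self (p : ℕ → ℝ[X]) (d : ℕ) : InCone p d (p d) := by
  refine ⟨fun j => if j = d then 1 else 0, fun j => by dsimp only; split_ifs <;> norm_num, ?_⟩
  rw [Finset.sum_eq_single d]
  · simp
  · intro j _ hj; simp [hj]
  · intro h; simp at h

lemma zero (p : ℕ → ℝ[X]) (d : ℕ) : InCone p d 0 := ⟨fun _ => 0, by simp, by simp⟩

lemma add (hf : InCone p d f) (hg : InCone p d g) : InCone p d (f + g) := by
  obtain ⟨c, hc, rfl⟩ := hf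
  obtain ⟨c', hc', rfl⟩ := hg
  refine ⟨fun j => c j + c' j, fun j => add_nonneg (hc j) (hc' j), ?_⟩
  rw [← Finset.sum_add_distrib]
  exact Finset.sum_congr rfl fun j _ => by rw [C_add]; ring

lemma smul (hf : InCone p d f) {r : ℝ} (hr : 0 ≤ r) : InCone p d (C r * f) := by
  obtain ⟨c, hc, rfl⟩ := hf
  refine ⟨fun j => r * c j, fun j => mul_nonneg hr (hc j), ?_⟩
  rw [Finset.mul_sum]
  exact Finset.sum_congr rfl fun j _ => by rw [C_mul]; ring

lemma mono (hf : InCone p d f) (h : d ≤ e) : InCone p e f := by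
  obtain ⟨c, hc, rfl⟩ := hf
  refine ⟨fun j => if j < d + 1 then c j else 0,
    fun j => by dsimp only; split_ifs; exacts [hc j, le_rfl], ?_⟩
  rw [← Finset.sum_subset (Finset.range_mono (Nat.add_le_add_right h 1))]
  · exact Finset.sum_congr rfl fun j hj => by simp only [if_pos (Finset.mem_range.1 hj)]
  · intro j _ hj
    simp only [if_neg (Finset.mem_range.not.1 hj), C_0, zero_mul]

lemma sum {ι : Type*} (s : Finset ι) (F : ι → ℝ[X]) (h : ∀ i ∈ s, InCone p d (F i)) :
    InCone p d (∑ i ∈ s, F i) := by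
  classical
  induction s using Finset.induction_on with
  | empty => simpa using zero p d
  | insert i s hi ih =>
    rw [Finset.sum_insert hi]
    exact (h i (by simp)).add (ih fun j hj => h j (by simp [hj]))

lemma trans (hf : InCone q d f) (h : ∀ j ≤ d, InCone p j (q j)) : InCone p d f := by
  obtain ⟨c, hc, rfl⟩ := hf
  refine sum _ _ fun j hj => ?_
  have hj : j ≤ d := Nat.lt_succ_iff.1 (Finset.mem_range.1 hj)
  exact ((h j hj).mono hj).smul (hc j)

lemma mul (H : ∀ i j, InCone p (i + j) (p i * p j)) (hf : InCone p d f) (hg : InCone p e g) :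
    InCone p (d + e) (f * g) := by
  obtain ⟨c, hc, rfl⟩ := hf
  obtain ⟨c', hc', rfl⟩ := hg
  rw [Finset.sum_mul_sum]
  refine sum _ _ fun i hi => sum _ _ fun j hj => ?_
  rw [Finset.mem_range] at hi hj
  have := ((H i j).mono (show i + j ≤ d + e by omega)).smul (mul_nonneg (hc i) (hc' j))
  convert this using 1
  rw [C_mul]; ring

end InCone

/-! ### Partial products over the smallest zeros -/

/-- If `p_j` takes a value `≤ 0` at `y`, then `p_{j+1}` takes a negative value at or to the right
of `y`: the largest zero of `p_{j+1}` exceeds that of `p_j`. -/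
lemma exists_neg_succ (N : ℕ) (p : ℕ → ℝ[X]) (a b : ℕ → ℝ)
    (h0 : p 0 = 1) (hm : ∀ j ≤ N, (p j).Monic ∧ (p j).natDegree = j)
    (hrec : ∀ j, j + 2 ≤ N → p (j + 2) = (X - C (b (j + 1))) * p (j + 1) - C (a j) * p j)
    (ha : ∀ j, j + 2 ≤ N → 0 < a j) :
    ∀ j, j + 1 ≤ N → ∀ y, (p j).eval y ≤ 0 → ∃ z, y ≤ z ∧ (p (j + 1)).eval z < 0 := by
  intro j
  induction j with
  | zero =>
    intro _ y hy
    rw [h0] at hy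
    norm_num at hy
  | succ j ih =>
    intro hj y hy
    obtain ⟨hmon, hdeg⟩ := hm (j + 1) (by omega)
    have htop : Filter.Tendsto (fun x => (p (j + 1)).eval x) Filter.atTop Filter.atTop := by
      apply Polynomial.tendsto_atTop_of_leadingCoeff_nonneg
      · rw [Polynomial.degree_eq_natDegree hmon.ne_zero, hdeg]; exact_mod_cast Nat.succ_pos j
      · rw [hmon.leadingCoeff]; norm_num
    have hcont : Continuous fun x => (p (j + 1)).eval x := (p (j + 1)).continuous
    -- `w` is the largest point at which `p_{j+1} ≤ 0`; it is a zero.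
    set S : Set ℝ := {x | (p (j + 1)).eval x ≤ 0} with hS
    have hbdd : BddAbove S := by
      obtain ⟨B, hB⟩ := Filter.eventually_atTop.1 (htop.eventually_gt_atTop 0)
      refine ⟨B, fun x hx => ?_⟩
      by_contra hlt
      exact absurd (hB x (not_le.1 hlt).le) (not_lt.2 hx)
    have hclosed : IsClosed S := isClosed_le hcont continuous_const
    have hwS : sSup S ∈ S := hclosed.csSup_mem ⟨y, hy⟩ hbdd
    set w := sSup S with hw
    have hyw : y ≤ w := le_csSup hbdd hy
    have hgt : ∀ x, w < x → 0 < (p (j + 1)).eval x := fun x hx => by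
      by_contra h
      exact absurd (le_csSup hbdd (show x ∈ S from not_lt.1 h)) (not_le.2 hx)
    have hw0 : (p (j + 1)).eval w = 0 := by
      refine le_antisymm hwS ?_
      have ht : Filter.Tendsto (fun x => (p (j + 1)).eval x) (nhdsWithin w (Set.Ioi w))
          (nhds ((p (j + 1)).eval w)) := hcont.continuousAt.tendsto.mono_left nhdsWithin_le_nhds
      refine ge_of_tendsto ht ?_
      filter_upwards [self_mem_nhdsWithin] with x hx using (hgt x hx).le
    refine ⟨w, hyw, ?_⟩
    have hprev : 0 < (p j).eval w := by
      by_contra h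
      obtain ⟨z, hz, hz'⟩ := ih (by omega) w (not_lt.1 h)
      rcases hz.eq_or_lt with rfl | hlt
      · rw [hw0] at hz'; exact lt_irrefl _ hz'
      · exact lt_asymm hz' (hgt z hlt)
    rw [hrec j hj]
    simp only [eval_sub, eval_mul, eval_C, hw0]
    have := mul_pos (ha j hj) hprev
    linarith

/-- If `p_N ≥ 0` on `[c, ∞)`, then all earlier `p_j` are positive at `c`: a value `≤ 0` would
propagate up to `p_N` by `exists_neg_succ`. -/
lemma eval_pos_of_top_nonneg (N : ℕ) (p : ℕ → ℝ[X]) (a b : ℕ → ℝ)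
    (h0 : p 0 = 1) (hm : ∀ j ≤ N, (p j).Monic ∧ (p j).natDegree = j)
    (hrec : ∀ j, j + 2 ≤ N → p (j + 2) = (X - C (b (j + 1))) * p (j + 1) - C (a j) * p j)
    (ha : ∀ j, j + 2 ≤ N → 0 < a j) (c : ℝ) (hc : ∀ x, c ≤ x → 0 ≤ (p N).eval x) :
    ∀ j < N, 0 < (p j).eval c := by
  intro j hj
  by_contra hneg
  have key : ∀ i, j + 1 + i ≤ N → ∃ z, c ≤ z ∧ (p (j + 1 + i)).eval z < 0 := by
    intro i
    induction i with
    | zero =>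
      intro h
      exact exists_neg_succ N p a b h0 hm hrec ha j h c (not_lt.1 hneg)
    | succ i ih =>
      intro h
      obtain ⟨z, hz, hz'⟩ := ih (by omega)
      obtain ⟨z', h1, h2⟩ := exists_neg_succ N p a b h0 hm hrec ha (j + 1 + i) h z hz'.le
      exact ⟨z', hz.trans h1, h2⟩
  obtain ⟨z, hz, hz'⟩ := key (N - (j + 1)) (by omega)
  rw [show j + 1 + (N - (j + 1)) = N by omega] at hz'
  exact absurd (hc z hz) (not_le.2 hz')

/-- The Christoffel transform of `p`: `q_{j+1} = p_{j+1} + m_j q_j`. When `m_j` is chosen as in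
`inCone_prod_range` this is `q_j = (p_{j+1} - (p_{j+1}(c) / p_j(c)) p_j) / (X - c)`. -/
def christoffel (p : ℕ → ℝ[X]) (m : ℕ → ℝ) : ℕ → ℝ[X]
  | 0 => 1
  | j + 1 => p (j + 1) + C (m j) * christoffel p m j

/-- Let `p_0, …, p_N` be monic and satisfy a three-term recurrence with positive coefficients
`a_j`, and let `p_N` have the zeros `β_0 < ⋯ < β_{N-1}`. Then each proper partial product
`∏_{i<m} (X - β_i)` over the smallest zeros is a non-negative combination of `p_0, …, p_m`.
Induction on `N`: the Christoffel transform at the largest zero of `p_N` satisfies the same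
hypotheses with `N - 1` and without that zero, and its members are non-negative combinations of
the `p_j`. -/
lemma inCone_prod_range (N : ℕ) : ∀ (p : ℕ → ℝ[X]) (a b β : ℕ → ℝ),
    p 0 = 1 → (∀ j ≤ N, (p j).Monic ∧ (p j).natDegree = j) →
    (1 ≤ N → p 1 = X - C (b 0)) →
    (∀ j, j + 2 ≤ N → p (j + 2) = (X - C (b (j + 1))) * p (j + 1) - C (a j) * p j) →
    (∀ j, j + 2 ≤ N → 0 < a j) →
    p N = ∏ i ∈ Finset.range N, (X - C (β i)) →
    (∀ i j, i < j → j < N → β i < β j) →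
    ∀ m < N, InCone p m (∏ i ∈ Finset.range m, (X - C (β i))) := by
  induction N with
  | zero => intro p a b β _ _ _ _ _ _ _ m hm; omega
  | succ M ih =>
    intro p a b β h0 hmon h1 hrec ha hN hβ
    set c := β M with hc
    have hpos : ∀ j, j ≤ M → 0 < (p j).eval c := by
      intro j hj
      refine eval_pos_of_top_nonneg (M + 1) p a b h0 hmon hrec ha c ?_ j (by omega)
      intro x hx
      rw [hN, eval_prod]
      refine Finset.prod_nonneg fun i hi => ?_
      rw [Finset.mem_range] at hi
      have : β i ≤ c := by
        rcases Nat.lt_succ_iff_lt_or_eq.1 hi with h | rfl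
        · exact (hβ i M h (by omega)).le
        · exact le_rfl
      simp only [eval_sub, eval_X, eval_C]
      linarith
    have hzero : (p (M + 1)).eval c = 0 := by
      rw [hN, Finset.prod_range_succ]; simp [hc]
    set r : ℕ → ℝ := fun j => (p (j + 1)).eval c / (p j).eval c with hr
    set m : ℕ → ℝ := fun j => a j / r j with hmdef
    have hrpos : ∀ j, j + 1 ≤ M → 0 < r j := fun j hj =>
      div_pos (hpos _ hj) (hpos _ (by omega))
    have hmpos : ∀ j, j + 1 ≤ M → 0 < m j := fun j hj => div_pos (ha j (by omega)) (hrpos j hj)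
    set q := christoffel p m with hq
    have hq0 : q 0 = 1 := rfl
    have hqs : ∀ j, q (j + 1) = p (j + 1) + C (m j) * q j := fun j => rfl
    have hr0 : r 0 = c - b 0 := by simp [hr, h0, h1 (by omega)]
    have hrs : ∀ j, j + 1 ≤ M → r (j + 1) = c - b (j + 1) - m j := by
      intro j hj
      have e0 := (hpos j (by omega)).ne'
      have e1 := (hpos (j + 1) hj).ne'
      simp only [hmdef, hr]
      rw [hrec j (by omega)]
      simp only [eval_sub, eval_mul, eval_X, eval_C]
      field_simp
    have haj : ∀ j, j + 1 ≤ M → a j = m j * r j := fun j hj =>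
      (div_mul_cancel₀ _ (hrpos j hj).ne').symm
    have hdiv : ∀ j, j ≤ M → (X - C c) * q j = p (j + 1) - C (r j) * p j := by
      intro j
      induction j with
      | zero =>
        intro _
        rw [hq0, h0, h1 (by omega), hr0, C_sub]; ring
      | succ j ihj =>
        intro hj
        rw [hqs, hrec j (by omega), hrs j hj, mul_add, mul_left_comm, ihj (by omega), haj j hj]
        simp only [C_sub, C_mul]
        ring
    -- `p_N(c) = 0`, so the last Christoffel polynomial is `p_N / (X - c)`.
    have hqM : q M = ∏ i ∈ Finset.range M, (X - C (β i)) := by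
      have h := hdiv M le_rfl
      have hrM : r M = 0 := by simp [hr, hzero]
      rw [hrM, C_0, zero_mul, sub_zero, hN, Finset.prod_range_succ, mul_comm] at h
      exact mul_right_cancel₀ (X_sub_C_ne_zero c) h
    have hqmon : ∀ j ≤ M, (q j).Monic ∧ (q j).natDegree = j := by
      intro j
      induction j with
      | zero => intro _; rw [hq0]; exact ⟨monic_one, natDegree_one⟩
      | succ j ihj =>
        intro hj
        obtain ⟨hp, hpd⟩ := hmon (j + 1) (by omega)
        have hqd := (ihj (by omega)).2
        have hlt : (C (m j) * q j).natDegree < (p (j + 1)).natDegree :=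
          (natDegree_C_mul_le _ _).trans_lt (by omega)
        rw [hqs]
        exact ⟨hp.add_of_left (degree_lt_degree hlt),
          by rw [natDegree_add_eq_left_of_natDegree_lt hlt, hpd]⟩
    have hqcone : ∀ j ≤ M, InCone p j (q j) := by
      intro j
      induction j with
      | zero => intro _; rw [hq0, ← h0]; exact InCone.self p 0
      | succ j ihj =>
        intro hj
        rw [hqs]
        exact (InCone.self p _).add
          (((ihj (by omega)).mono (Nat.le_succ j)).smul (hmpos j hj).le)
    intro k hk
    rcases Nat.lt_succ_iff_lt_or_eq.1 hk with hk | rfl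
    · refine InCone.trans (q := q) ?_ fun j hj => hqcone j (by omega)
      refine ih q (fun j => r (j + 1) * m j) (fun j => c - m j - r j) β hq0 hqmon ?_ ?_ ?_ hqM
        (fun i j hij hj => hβ i j hij (by omega)) k hk
      · intro _
        rw [hqs, hq0, h1 (by omega), hr0]
        simp only [C_sub]; ring
      · intro j hj
        have e1 := hdiv (j + 1) (by omega)
        have e2 := hqs j
        rw [hqs (j + 1)]
        simp only [C_sub, C_mul]
        linear_combination -e1 - C (r (j + 1)) * e2
      · intro j hj
        exact mul_pos (hrpos _ (by omega)) (hmpos _ (by omega))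
    · rw [← hqM]; exact hqcone _ le_rfl

/-! ### Linearization of products -/

/-- Askey's criterion: if the coefficients of the three-term recurrence are non-decreasing and
`a_j ≥ 0`, then products `p_i p_j` are non-negative combinations of the `p_k`. -/
lemma askey (p : ℕ → ℝ[X]) (a b : ℕ → ℝ) (h0 : p 0 = 1) (h1 : p 1 = X - C (b 0))
    (hrec : ∀ j, p (j + 2) = (X - C (b (j + 1))) * p (j + 1) - C (a j) * p j)
    (ha : ∀ j, 0 ≤ a j) (ham : Monotone a) (hbm : Monotone b) :
    ∀ i j, InCone p (i + j) (p i * p j) := by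
  -- The differences `p_{i+1} p_j - p_i p_{j+1}` are carried along in the induction.
  have key : ∀ i j, i ≤ j → InCone p (i + j) (p i * p j) ∧
      InCone p (i + j) (p (i + 1) * p j - p i * p (j + 1)) := by
    intro i
    induction i with
    | zero =>
      intro j _
      rw [h0, zero_add, one_mul, one_mul]
      refine ⟨InCone.self p j, ?_⟩
      cases j with
      | zero => rw [h0, mul_one, sub_self]; exact InCone.zero p _
      | succ j =>
        have : p (0 + 1) * p (j + 1) - p (j + 1 + 1)
            = C (b (j + 1) - b 0) * p (j + 1) + C (a j) * p j := by
          rw [hrec j, zero_add, h1, C_sub]; ring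
        rw [this]
        exact ((InCone.self p _).smul (sub_nonneg.2 (hbm (Nat.zero_le _)))).add
          (((InCone.self p _).smul (ha j)).mono (Nat.le_succ j))
    | succ i ih =>
      intro j hj
      obtain ⟨j, rfl⟩ : ∃ l, j = l + 1 := ⟨j - 1, by omega⟩
      have hij : i ≤ j := by omega
      have hprod : InCone p (i + 1 + (j + 1)) (p (i + 1) * p (j + 1)) := by
        have h := ((ih (j + 1) (by omega)).2.mono (show _ ≤ i + 1 + (j + 1) by omega)).add
          ((ih (j + 2) (by omega)).1.mono (show _ ≤ i + 1 + (j + 1) by omega))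
        convert h using 1
        ring
      refine ⟨hprod, ?_⟩
      have hD := (ih j hij).2
      have hprod' : InCone p (i + j + 1) (p (i + 1) * p j) := by
        have h := (hD.mono (Nat.le_succ (i + j))).add (ih (j + 1) (by omega)).1
        convert h using 1
        ring
      have e : p (i + 1 + 1) * p (j + 1) - p (i + 1) * p (j + 1 + 1)
          = C (b (j + 1) - b (i + 1)) * (p (i + 1) * p (j + 1))
            + (C (a j - a i) * (p (i + 1) * p j)
              + C (a i) * (p (i + 1) * p j - p i * p (j + 1))) := by
        rw [hrec i, hrec j, C_sub, C_sub]; ring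
      rw [e]
      exact (hprod.smul (sub_nonneg.2 (hbm (by omega)))).add
        (((hprod'.smul (sub_nonneg.2 (ham hij))).mono (by omega)).add
          ((hD.smul (ha i)).mono (by omega)))
  intro i j
  rcases le_total i j with h | h
  · exact (key i j h).1
  · rw [mul_comm, add_comm]; exact (key j i h).1

/-! ### The Jacobi operator and the recurrence coefficients -/

/-- The Jacobi differential operator `f ↦ (1 - X²) f'' + (B - S X) f'`. -/
def jac (B S : ℝ) (f : ℝ[X]) : ℝ[X] :=
  (1 - X ^ 2) * derivative (derivative f) + (C B - C S * X) * derivative f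

lemma coeff_jac (B S : ℝ) (f : ℝ[X]) (m : ℕ) :
    (jac B S f).coeff m = (m + 2) * (m + 1) * f.coeff (m + 2) + B * (m + 1) * f.coeff (m + 1)
      - m * (m - 1 + S) * f.coeff m := by
  have e : jac B S f = derivative (derivative f) - X ^ 2 * derivative (derivative f)
      + C B * derivative f - C S * (X * derivative f) := by rw [jac]; ring
  rw [e]
  simp only [coeff_sub, coeff_add, coeff_C_mul]
  rcases m with _ | _ | m
  · simp [coeff_derivative]
    ring
  · simp [coeff_derivative, coeff_X_pow_mul', coeff_X_mul]
    ring
  · rw [coeff_X_mul, coeff_X_pow_mul]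
    simp only [coeff_derivative]
    push_cast
    ring

lemma natDegree_jac_le (B S : ℝ) (f : ℝ[X]) : (jac B S f).natDegree ≤ f.natDegree := by
  rw [natDegree_le_iff_coeff_eq_zero]
  intro m hm
  rw [coeff_jac, coeff_eq_zero_of_natDegree_lt hm, coeff_eq_zero_of_natDegree_lt (by omega),
    coeff_eq_zero_of_natDegree_lt (by omega)]
  ring

section Functional

variable {ℓ : ℝ[X] →ₗ[ℝ] ℝ} {P : ℕ → ℝ[X]}

/-- Orthogonality to all lower degrees determines a polynomial of degree `≤ k` up to a scalar. -/
lemma eq_C_mul_of_orth (hpos : ∀ f, ℓ (f * f) = 0 → f = 0)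
    (hP : ∀ k, (P k).Monic ∧ (P k).natDegree = k ∧ ∀ q : ℝ[X], q.natDegree < k → ℓ (P k * q) = 0)
    {f : ℝ[X]} {k : ℕ} (hf : f.natDegree ≤ k) (ho : ∀ q : ℝ[X], q.natDegree < k → ℓ (f * q) = 0) :
    f = C (f.coeff k) * P k := by
  obtain ⟨hm, hd, hPo⟩ := hP k
  have hPk : (P k).coeff k = 1 := by
    have := hm.coeff_natDegree
    rwa [hd] at this
  set g := f - C (f.coeff k) * P k with hg
  by_contra hne
  have hg0 : g ≠ 0 := fun h => hne (sub_eq_zero.1 h)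
  have hgk : g.coeff k = 0 := by rw [hg, coeff_sub, coeff_C_mul, hPk]; ring
  have hgd : g.natDegree ≤ k :=
    (natDegree_sub_le _ _).trans (max_le hf ((natDegree_C_mul_le _ _).trans hd.le))
  have hlt : g.natDegree < k := by
    refine lt_of_le_of_ne hgd fun h => hg0 ?_
    rw [← leadingCoeff_eq_zero, leadingCoeff, h, hgk]
  refine hg0 (hpos g ?_)
  have e : g * g = f * g - f.coeff k • (P k * g) := by
    rw [smul_eq_C_mul]; nth_rewrite 1 [hg]; ring
  rw [e, map_sub, map_smul, ho g hlt, hPo g hlt]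
  simp

/-- Self-adjointness of the Jacobi operator, from the Pearson equation applied to
`f' g - f g'`. -/
lemma jac_symm {B S : ℝ}
    (hpear : ∀ q, ℓ ((1 - X ^ 2) * derivative q + (C B - C S * X) * q) = 0) (f g : ℝ[X]) :
    ℓ (jac B S f * g) = ℓ (f * jac B S g) := by
  have h := hpear (derivative f * g - f * derivative g)
  have e : (1 - X ^ 2) * derivative (derivative f * g - f * derivative g)
      + (C B - C S * X) * (derivative f * g - f * derivative g)
      = jac B S f * g - f * jac B S g := by
    simp only [jac, derivative_sub, derivative_mul]; ring
  rw [e, map_sub] at h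
  exact sub_eq_zero.1 h

/-- The Jacobi differential equation: `jac P_k` has degree `≤ k` and, by self-adjointness, is
orthogonal to all lower degrees. -/
lemma jac_eigen {B S : ℝ} (hpos : ∀ f, ℓ (f * f) = 0 → f = 0)
    (hpear : ∀ q, ℓ ((1 - X ^ 2) * derivative q + (C B - C S * X) * q) = 0)
    (hP : ∀ k, (P k).Monic ∧ (P k).natDegree = k ∧ ∀ q : ℝ[X], q.natDegree < k → ℓ (P k * q) = 0)
    (k : ℕ) : jac B S (P k) = C (-(k * (k - 1 + S))) * P k := by
  obtain ⟨hm, hd, hPo⟩ := hP k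
  have hPk : (P k).coeff k = 1 := by
    have := hm.coeff_natDegree
    rwa [hd] at this
  have h := eq_C_mul_of_orth hpos hP (f := jac B S (P k)) (k := k)
    ((natDegree_jac_le B S _).trans hd.le) (fun q hq => by
      rw [jac_symm hpear]
      exact hPo _ ((natDegree_jac_le B S q).trans_lt hq))
  rw [h, coeff_jac, hPk, coeff_eq_zero_of_natDegree_lt (by omega),
    coeff_eq_zero_of_natDegree_lt (by omega)]
  congr 2
  ring

/-- The recurrence coefficients of the monic Gegenbauer polynomials with parameter `lam`:
`G_{m+1} = x G_m - geg lam m * G_{m-1}`. (For `lam = 1`, `m = 0` the denominator vanishes and the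
value is `0`.) -/
def geg (lam : ℝ) (m : ℕ) : ℝ := m * (m + 2 * lam - 1) / (4 * (m + lam) * (m + lam - 1))

lemma geg_nonneg {lam : ℝ} (h : 1 ≤ lam) (m : ℕ) : 0 ≤ geg lam m := by
  have : (0 : ℝ) ≤ m := m.cast_nonneg
  rw [geg]
  exact div_nonneg (mul_nonneg this (by linarith)) (mul_nonneg (by linarith) (by linarith))

lemma geg_pos {lam : ℝ} (h : 1 ≤ lam) (m : ℕ) : 0 < geg lam (m + 1) := by
  have : (0 : ℝ) ≤ m := m.cast_nonneg
  rw [geg]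
  push_cast
  exact div_pos (mul_pos (by linarith) (by linarith)) (mul_pos (by linarith) (by linarith))

lemma geg_mono {lam : ℝ} (h : 1 ≤ lam) : Monotone (geg lam) := by
  refine monotone_nat_of_le_succ fun m => ?_
  rcases m with _ | m
  · have : geg lam 0 = 0 := by simp [geg]
    rw [this]; exact geg_nonneg h 1
  · -- `geg lam m = 1/4 - lam (lam - 1) / (4 (m + lam) (m + lam - 1))` for `m ≥ 1`
    have hm : (0 : ℝ) ≤ m := m.cast_nonneg
    rw [geg, geg]
    push_cast
    rw [div_le_div_iff₀ (mul_pos (by linarith) (by linarith))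
      (mul_pos (by linarith) (by linarith)), ← sub_nonneg]
    have e : ((m : ℝ) + 1 + 1) * (m + 1 + 1 + 2 * lam - 1) * (4 * (m + 1 + lam) * (m + 1 + lam - 1))
        - (m + 1) * (m + 1 + 2 * lam - 1) * (4 * (m + 1 + 1 + lam) * (m + 1 + 1 + lam - 1))
        = 8 * (m + 1 + lam) * (lam * (lam - 1)) := by ring
    rw [e]
    exact mul_nonneg (by linarith) (mul_nonneg (by linarith) (by linarith))

/-- Recurrence coefficients of the monic Jacobi polynomials with parameters
`(lam - 1/2, e - 1/2)`; these come from the Gegenbauer recurrence applied twice, through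
`t = 2 x² - 1`. -/
def recB (lam : ℝ) (e k : ℕ) : ℝ := 2 * (geg lam (2 * k + e) + geg lam (2 * k + e + 1)) - 1

/-- The other recurrence coefficient, shifted by one: it multiplies `P_k` in the expression for
`P_{k+2}`. -/
def recA (lam : ℝ) (e k : ℕ) : ℝ := 4 * (geg lam (2 * k + e + 1) * geg lam (2 * k + e + 2))

lemma recB_mono {lam : ℝ} (h : 1 ≤ lam) (e : ℕ) : Monotone (recB lam e) := by
  intro i j hij
  have h1 := geg_mono h (show 2 * i + e ≤ 2 * j + e by omega)
  have h2 := geg_mono h (show 2 * i + e + 1 ≤ 2 * j + e + 1 by omega)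
  simp only [recB]
  linarith

lemma recA_mono {lam : ℝ} (h : 1 ≤ lam) (e : ℕ) : Monotone (recA lam e) := by
  intro i j hij
  have h1 := geg_mono h (show 2 * i + e + 1 ≤ 2 * j + e + 1 by omega)
  have h2 := geg_mono h (show 2 * i + e + 2 ≤ 2 * j + e + 2 by omega)
  have := mul_le_mul h1 h2 (geg_nonneg h _) (geg_nonneg h _)
  simp only [recA]
  linarith

lemma recA_pos {lam : ℝ} (h : 1 ≤ lam) (e k : ℕ) : 0 < recA lam e k :=
  mul_pos (by norm_num) (mul_pos (geg_pos h _) (geg_pos h _))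

/-- The monic orthogonal polynomials of the Jacobi weight with parameters `(lam - 1/2, e - 1/2)`
satisfy the three-term recurrence with coefficients `recB`, `recA`. -/
lemma jacobi_rec {lam : ℝ} {e : ℕ} (hlam : 1 ≤ lam) (he : e ≤ 1)
    (hpos : ∀ f, ℓ (f * f) = 0 → f = 0)
    (hpear : ∀ q, ℓ ((1 - X ^ 2) * derivative q
      + (C (e - lam) - C (lam + 1 + e) * X) * q) = 0)
    (hP : ∀ k, (P k).Monic ∧ (P k).natDegree = k ∧
      ∀ q : ℝ[X], q.natDegree < k → ℓ (P k * q) = 0) :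
    P 0 = 1 ∧ P 1 = X - C (recB lam e 0) ∧
      ∀ k, P (k + 2) = (X - C (recB lam e (k + 1))) * P (k + 1) - C (recA lam e k) * P k := by
  have hlead : ∀ k, (P k).coeff k = 1 := fun k => by
    have := (hP k).1.coeff_natDegree
    rwa [(hP k).2.1] at this
  have hvan : ∀ k m, k < m → (P k).coeff m = 0 := fun k m h =>
    coeff_eq_zero_of_natDegree_lt (by rw [(hP k).2.1]; exact h)
  have he0 : (0 : ℝ) ≤ e := e.cast_nonneg
  have hden : ∀ k : ℕ, (0 : ℝ) < 2 * k + (lam + 1 + e) := fun k => by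
    have : (0 : ℝ) ≤ k := k.cast_nonneg
    linarith
  -- The second and third coefficients of `P_k`, read off the differential equation.
  have hx : ∀ k : ℕ, (P (k + 1)).coeff k = (lam - e) * (k + 1) / (2 * k + (lam + 1 + e)) := by
    intro k
    have h := congrArg (fun f => f.coeff k) (jac_eigen hpos hpear hP (k + 1))
    simp only [coeff_jac, coeff_C_mul, hlead, hvan (k + 1) (k + 2) (by omega)] at h
    rw [eq_div_iff (hden k).ne']
    push_cast at h
    linear_combination h
  have hy : ∀ k : ℕ, (P (k + 2)).coeff k =
      -((k + 1) * (k + 2 + (e - lam) * (P (k + 2)).coeff (k + 1)))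
        / (2 * (2 * k + 1 + (lam + 1 + e))) := by
    intro k
    have h := congrArg (fun f => f.coeff k) (jac_eigen hpos hpear hP (k + 2))
    simp only [coeff_jac, coeff_C_mul, hlead] at h
    have := hden k
    rw [eq_div_iff (by linarith)]
    push_cast at h
    linear_combination h
  have h0 : P 0 = 1 := by
    have := (hP 0).2.1
    exact (hP 0).1.natDegree_eq_zero.1 this
  have hB : ∀ k : ℕ, (P (k + 1)).coeff k - (P (k + 2)).coeff (k + 1) = recB lam e (k + 1) := by
    intro k
    rw [hx k, hx (k + 1)]
    have hk : (0 : ℝ) ≤ k := k.cast_nonneg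
    simp only [recB, geg]
    have p0 : (2 * k + 1 + lam : ℝ) ≠ 0 := by positivity
    have p1 : (2 * k + 2 + lam : ℝ) ≠ 0 := by positivity
    have p2 : (2 * k + 3 + lam : ℝ) ≠ 0 := by positivity
    have p3 : (2 * k + 4 + lam : ℝ) ≠ 0 := by positivity
    interval_cases e
    · push_cast
      rw [show (2 * (k : ℝ) + (lam + 1 + 0)) = 2 * k + 1 + lam by ring,
        show (2 * ((k : ℝ) + 1) + (lam + 1 + 0)) = 2 * k + 3 + lam by ring,
        show (2 * ((k : ℝ) + 1) + 0 + lam - 1) = 2 * k + 1 + lam by ring,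
        show (2 * ((k : ℝ) + 1) + 0 + lam) = 2 * k + 2 + lam by ring,
        show (2 * ((k : ℝ) + 1) + 0 + 1 + lam - 1) = 2 * k + 2 + lam by ring,
        show (2 * ((k : ℝ) + 1) + 0 + 1 + lam) = 2 * k + 3 + lam by ring]
      field_simp
      ring
    · push_cast
      rw [show (2 * (k : ℝ) + (lam + 1 + 1)) = 2 * k + 2 + lam by ring,
        show (2 * ((k : ℝ) + 1) + (lam + 1 + 1)) = 2 * k + 4 + lam by ring,
        show (2 * ((k : ℝ) + 1) + 1 + lam - 1) = 2 * k + 2 + lam by ring,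
        show (2 * ((k : ℝ) + 1) + 1 + lam) = 2 * k + 3 + lam by ring,
        show (2 * ((k : ℝ) + 1) + 1 + 1 + lam - 1) = 2 * k + 3 + lam by ring,
        show (2 * ((k : ℝ) + 1) + 1 + 1 + lam) = 2 * k + 4 + lam by ring]
      field_simp
      ring
  have hA : ∀ k : ℕ, (X * P (k + 1)).coeff k - (P (k + 2)).coeff k
      - ((P (k + 1)).coeff k - (P (k + 2)).coeff (k + 1)) * (P (k + 1)).coeff k
      = recA lam e k := by
    intro k
    -- For `k = 0` the closed form of the third coefficient correctly gives `0`.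
    have hz : (X * P (k + 1)).coeff k =
        -(k * (k + 1 + (e - lam) * (P (k + 1)).coeff k))
          / (2 * (2 * k - 1 + (lam + 1 + e))) := by
      rcases k with _ | k
      · simp
      · rw [coeff_X_mul, hy k]
        push_cast
        congr 1 <;> ring
    rw [hz, hy k, hx k, hx (k + 1)]
    have hk : (0 : ℝ) ≤ k := k.cast_nonneg
    simp only [recA, geg]
    have p0 : (2 * k + lam : ℝ) ≠ 0 := by positivity
    have p1 : (2 * k + 1 + lam : ℝ) ≠ 0 := by positivity
    have p2 : (2 * k + 2 + lam : ℝ) ≠ 0 := by positivity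
    have p3 : (2 * k + 3 + lam : ℝ) ≠ 0 := by positivity
    have p4 : (2 * k + 4 + lam : ℝ) ≠ 0 := by positivity
    interval_cases e
    · push_cast
      rw [show (2 * (k : ℝ) + (lam + 1 + 0)) = 2 * k + 1 + lam by ring,
        show (2 * (k : ℝ) - 1 + (lam + 1 + 0)) = 2 * k + lam by ring,
        show (2 * (k : ℝ) + 1 + (lam + 1 + 0)) = 2 * k + 2 + lam by ring,
        show (2 * ((k : ℝ) + 1) + (lam + 1 + 0)) = 2 * k + 3 + lam by ring,
        show (2 * (k : ℝ) + 0 + 1 + lam - 1) = 2 * k + lam by ring,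
        show (2 * (k : ℝ) + 0 + 1 + lam) = 2 * k + 1 + lam by ring,
        show (2 * (k : ℝ) + 0 + 2 + lam - 1) = 2 * k + 1 + lam by ring,
        show (2 * (k : ℝ) + 0 + 2 + lam) = 2 * k + 2 + lam by ring]
      field_simp
      ring
    · push_cast
      rw [show (2 * (k : ℝ) + (lam + 1 + 1)) = 2 * k + 2 + lam by ring,
        show (2 * (k : ℝ) - 1 + (lam + 1 + 1)) = 2 * k + 1 + lam by ring,
        show (2 * (k : ℝ) + 1 + (lam + 1 + 1)) = 2 * k + 3 + lam by ring,
        show (2 * ((k : ℝ) + 1) + (lam + 1 + 1)) = 2 * k + 4 + lam by ring,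
        show (2 * (k : ℝ) + 1 + 1 + lam - 1) = 2 * k + 1 + lam by ring,
        show (2 * (k : ℝ) + 1 + 1 + lam) = 2 * k + 2 + lam by ring,
        show (2 * (k : ℝ) + 1 + 2 + lam - 1) = 2 * k + 2 + lam by ring,
        show (2 * (k : ℝ) + 1 + 2 + lam) = 2 * k + 3 + lam by ring]
      field_simp
      ring
  refine ⟨h0, ?_, fun k => ?_⟩
  · have h1 : P 1 = X + C ((P 1).coeff 0) := by
      have := (hP 1).1.eq_X_add_C (hP 1).2.1
      exact this
    have hc : (P 1).coeff 0 = -recB lam e 0 := by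
      have hx0 := hx 0
      simp only [Nat.cast_zero, zero_add, mul_zero, mul_one] at hx0
      rw [hx0]
      simp only [recB, geg]
      have p0 : lam ≠ 0 := by positivity
      have p1 : (1 + lam : ℝ) ≠ 0 := by positivity
      have p2 : (2 + lam : ℝ) ≠ 0 := by positivity
      interval_cases e
      · simp
        rw [show lam + 1 = 1 + lam by ring]
        field_simp
        ring
      · push_cast
        rw [show lam + 1 + 1 = 2 + lam by ring, show 1 + lam - 1 = lam by ring,
          show 2 + lam - 1 = 1 + lam by ring]
        field_simp
        ring
    rw [h1, hc, C_neg]; ring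
  · obtain ⟨hm1, hd1, ho1⟩ := hP (k + 1)
    obtain ⟨hm2, hd2, ho2⟩ := hP (k + 2)
    set b := (P (k + 1)).coeff k - (P (k + 2)).coeff (k + 1) with hb
    -- `X P_{k+1} - P_{k+2} - b P_{k+1}` is orthogonal to degrees `< k`, hence a multiple of `P_k`.
    set f := X * P (k + 1) - P (k + 2) - C b * P (k + 1) with hf
    have hfdeg : f.natDegree ≤ k := by
      rw [natDegree_le_iff_coeff_eq_zero]
      intro m hm
      obtain ⟨m, rfl⟩ : ∃ l, m = l + 1 := ⟨m - 1, by omega⟩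
      simp only [hf, coeff_sub, coeff_X_mul, coeff_C_mul]
      rcases (show m = k ∨ m = k + 1 ∨ k + 1 < m by omega) with rfl | rfl | h
      · rw [hlead, hb]; ring
      · rw [hlead, hlead, hvan (k + 1) (k + 1 + 1) (by omega)]; ring
      · rw [hvan _ _ h, hvan _ _ (show k + 2 < m + 1 by omega),
          hvan _ _ (show k + 1 < m + 1 by omega)]; ring
    have hforth : ∀ q : ℝ[X], q.natDegree < k → ℓ (f * q) = 0 := by
      intro q hq
      have e1 : f * q = P (k + 1) * (X * q) - P (k + 2) * q - b • (P (k + 1) * q) := by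
        rw [smul_eq_C_mul, hf]; ring
      have hXq : (X * q).natDegree < k + 1 :=
        natDegree_mul_le.trans_lt (by rw [natDegree_X]; omega)
      rw [e1, map_sub, map_sub, map_smul, ho1 _ hXq, ho2 _ (by omega), ho1 _ (by omega)]
      simp
    have h := eq_C_mul_of_orth hpos hP hfdeg hforth
    have hcf : f.coeff k = recA lam e k := by
      rw [← hA k]
      simp only [hf, coeff_sub, coeff_C_mul]
      rw [hb]
    rw [hcf, hf, hb, hB] at h
    linear_combination -h

end Functional

/-! ### The functional given by the weight -/

lemma vw_intervalIntegrable (n b : ℕ) (hn : 2 ≤ n) :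
    IntervalIntegrable (vw n 1 b) volume (-1) 1 := by
  have hn' : (2 : ℝ) ≤ n := by exact_mod_cast hn
  have h1 : IntervalIntegrable (fun t : ℝ => (1 + t) ^ ((b : ℝ) - 1 / 2)) volume (-1) 1 := by
    have h := (intervalIntegral.intervalIntegrable_rpow' (a := 0) (b := 2)
      (r := (b : ℝ) - 1 / 2) (by have : (0 : ℝ) ≤ b := b.cast_nonneg
                                 linarith)).comp_add_right 1
    norm_num at h
    simpa only [add_comm] using h
  refine h1.mul_continuousOn ?_
  refine Continuous.continuousOn ?_
  refine (continuous_const.sub continuous_id).rpow_const fun x => Or.inr ?_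
  push_cast
  linarith

lemma integrableOn_mul_vw (n b : ℕ) (hn : 2 ≤ n) (f : ℝ[X]) :
    IntegrableOn (fun t => f.eval t * vw n 1 b t) (Set.Ioo (-1) 1) := by
  have h := (vw_intervalIntegrable n b hn).continuousOn_mul (f.continuous.continuousOn)
  rw [intervalIntegrable_iff_integrableOn_Ioo_of_le (by norm_num)] at h
  exact h

/-- The functional `f ↦ ∫_{-1}^1 f v_{1,b}`. -/
def ell (n b : ℕ) (hn : 2 ≤ n) : ℝ[X] →ₗ[ℝ] ℝ where
  toFun f := ∫ t in Set.Ioo (-1 : ℝ) 1, f.eval t * vw n 1 b t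
  map_add' f g := by
    rw [← integral_add (integrableOn_mul_vw n b hn f) (integrableOn_mul_vw n b hn g)]
    simp only [eval_add, add_mul]
  map_smul' r f := by
    rw [RingHom.id_apply, smul_eq_mul, ← integral_const_mul]
    simp only [eval_smul, smul_eq_mul, mul_assoc]

lemma vw_pos (n b : ℕ) {t : ℝ} (ht : t ∈ Set.Ioo (-1 : ℝ) 1) : 0 < vw n 1 b t :=
  mul_pos (Real.rpow_pos_of_pos (by linarith [ht.1]) _)
    (Real.rpow_pos_of_pos (by linarith [ht.2]) _)

/-- The functional is positive definite. -/
lemma ell_pos (n b : ℕ) (hn : 2 ≤ n) (f : ℝ[X]) (h : ell n b hn (f * f) = 0) : f = 0 := by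
  change ∫ t in Set.Ioo (-1 : ℝ) 1, (f * f).eval t * vw n 1 b t = 0 at h
  rw [setIntegral_eq_zero_iff_of_nonneg_ae _ (integrableOn_mul_vw n b hn _)] at h
  · by_contra hf
    have hroots : volume {t | f.eval t = 0} = 0 := by
      refine Set.Finite.measure_zero ?_ _
      refine (f.roots.toFinset.finite_toSet).subset fun t ht => ?_
      simpa [hf] using ht
    have hae : ∀ᵐ t ∂(volume.restrict (Set.Ioo (-1 : ℝ) 1)), False := by
      have h2 : ∀ᵐ t ∂(volume.restrict (Set.Ioo (-1 : ℝ) 1)), f.eval t ≠ 0 :=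
        ae_restrict_of_ae (by rw [ae_iff]; simpa using hroots)
      filter_upwards [h, h2, ae_restrict_mem measurableSet_Ioo] with t h1 h2 ht
      simp only [eval_mul, Pi.zero_apply] at h1
      exact (mul_ne_zero (mul_ne_zero h2 h2) (vw_pos n b ht).ne') h1
    rw [Filter.eventually_false_iff_eq_bot, ae_eq_bot, Measure.restrict_eq_zero,
      Real.volume_Ioo] at hae
    norm_num at hae
  · filter_upwards [ae_restrict_mem measurableSet_Ioo] with t ht
    simp only [eval_mul, Pi.zero_apply]
    exact mul_nonneg (mul_self_nonneg _) (vw_pos n b ht).le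

/-- The Pearson equation of the Jacobi weight `v`: the integrand is the derivative of
`q(t) (1 - t²) v(t)`, which vanishes at both end points. -/
lemma ell_pearson (n b : ℕ) (hn : 2 ≤ n) (q : ℝ[X]) :
    ell n b hn ((1 - X ^ 2) * derivative q
      + (C ((b : ℝ) - n / 2) - C ((n : ℝ) / 2 + 1 + b) * X) * q) = 0 := by
  set Q := (1 - X ^ 2) * derivative q
      + (C ((b : ℝ) - n / 2) - C ((n : ℝ) / 2 + 1 + b) * X) * q with hQ
  change ∫ t in Set.Ioo (-1 : ℝ) 1, Q.eval t * vw n 1 b t = 0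
  have hn' : (2 : ℝ) ≤ n := by exact_mod_cast hn
  have hb' : (0 : ℝ) ≤ b := b.cast_nonneg
  set A : ℝ := ((1 : ℕ) : ℝ) + ((n : ℝ) - 3) / 2 with hA
  set B : ℝ := (b : ℝ) - 1 / 2 with hB
  have hA0 : 0 < A + 1 := by rw [hA]; push_cast; linarith
  have hB0 : 0 < B + 1 := by rw [hB]; linarith
  set F : ℝ → ℝ := fun t => q.eval t * ((1 + t) ^ (B + 1) * (1 - t) ^ (A + 1)) with hF
  have hFc : Continuous F := by
    refine q.continuous.mul (Continuous.mul ?_ ?_)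
    · exact (continuous_const.add continuous_id).rpow_const fun x => Or.inr hB0.le
    · exact (continuous_const.sub continuous_id).rpow_const fun x => Or.inr hA0.le
  have hint := (vw_intervalIntegrable n b hn).continuousOn_mul (Q.continuous.continuousOn)
  have hder : ∀ t ∈ Set.Ioo (-1 : ℝ) 1, HasDerivAt F (Q.eval t * vw n 1 b t) t := by
    intro t ht
    have hp : 0 < 1 + t := by linarith [ht.1]
    have hm : 0 < 1 - t := by linarith [ht.2]
    have d1 : HasDerivAt (fun t : ℝ => (1 + t) ^ (B + 1)) ((B + 1) * (1 + t) ^ B) t := by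
      have := ((hasDerivAt_id t).const_add 1).rpow_const (p := B + 1) (Or.inl hp.ne')
      simpa using this
    have d2 : HasDerivAt (fun t : ℝ => (1 - t) ^ (A + 1)) (-((A + 1) * (1 - t) ^ A)) t := by
      have := ((hasDerivAt_id t).const_sub 1).rpow_const (p := A + 1) (Or.inl hm.ne')
      exact this.congr_deriv (by simp only [id, add_sub_cancel_right]; ring)
    have d := (q.hasDerivAt t).mul (d1.mul d2)
    refine d.congr_deriv ?_
    have hv : vw n 1 b t = (1 + t) ^ B * (1 - t) ^ A := rfl
    have hAB : (b : ℝ) - n / 2 = B - A := by rw [hA, hB]; push_cast; ring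
    have hAB' : (n : ℝ) / 2 + 1 + b = A + B + 2 := by rw [hA, hB]; push_cast; ring
    rw [hv, hQ, hAB, hAB']
    simp only [Pi.mul_apply]
    rw [Real.rpow_add_one hp.ne', Real.rpow_add_one hm.ne']
    simp only [eval_add, eval_mul, eval_sub, eval_pow, eval_one, eval_X, eval_C]
    ring
  have key := intervalIntegral.integral_eq_sub_of_hasDerivAt_of_le (by norm_num)
    hFc.continuousOn hder hint
  rw [intervalIntegral.integral_of_le (by norm_num), integral_Ioc_eq_integral_Ioo] at key
  rw [key]
  simp [hF, Real.zero_rpow hA0.ne', Real.zero_rpow hB0.ne']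

/-! ### The expansions -/

lemma prod_Icc_eq_range (β : ℕ → ℝ) (k L : ℕ) (hk : k ≤ L) :
    ∏ i ∈ Finset.Icc k L, (X - C (β i))
      = ∏ i ∈ Finset.range (L - k + 1), (X - C (β (L - i))) := by
  refine Finset.prod_nbij' (fun i => L - i) (fun i => L - i) ?_ ?_ ?_ ?_ ?_
  · intro i hi; simp only [Finset.mem_Icc, Finset.mem_range] at hi ⊢; omega
  · intro i hi; simp only [Finset.mem_Icc, Finset.mem_range] at hi ⊢; omega
  · intro i hi; simp only [Finset.mem_Icc] at hi; omega
  · intro i hi; simp only [Finset.mem_range] at hi; omega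
  · intro i hi
    simp only [Finset.mem_Icc] at hi
    rw [show L - (L - i) = i by omega]

/-- If `Π_L(t) = ∏_{i=1}^{L} (t-βᵢ)`, with `-1 < β_L < … < β₁ < 1`, is orthogonal to all
polynomials of degree `≤ L-2` with weight `v_{1,b}`, then for every `k = 2,…,L` the
polynomials `∏_{i=k}^{L}(t-βᵢ)` and `∏_{i=2}^{L}(t-βᵢ)·∏_{i=k}^{L}(t-βᵢ)` have
non-negative coefficients in their expansions in the family `P_j^{1,b}`. -/
theorem stmt_12 (n L b : ℕ) (hn : 2 ≤ n) (hL : 2 ≤ L) (hb : b ≤ 1)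
    (β : ℕ → ℝ)
    (hβr : ∀ i ∈ Finset.Icc 1 L, β i ∈ Set.Ioo (-1 : ℝ) 1)
    (hβmono : ∀ i ∈ Finset.Icc 1 L, ∀ j ∈ Finset.Icc 1 L, i < j → β j < β i)
    (P : ℕ → Polynomial ℝ) (hP : IsMonicOrth n 1 b P)
    (horth : ∀ q : Polynomial ℝ, q.natDegree ≤ L - 2 →
      ∫ t in Set.Ioo (-1 : ℝ) 1,
        (∏ i ∈ Finset.Icc 1 L, (Polynomial.X - Polynomial.C (β i))).eval t * q.eval t *
          vw n 1 b t = 0) :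
    ∀ k ∈ Finset.Icc 2 L,
      (∃ c : ℕ → ℝ, (∀ j, 0 ≤ c j) ∧
        ∏ i ∈ Finset.Icc k L, (Polynomial.X - Polynomial.C (β i)) =
          ∑ j ∈ Finset.range (L - k + 2), Polynomial.C (c j) * P j) ∧
      (∃ d : ℕ → ℝ, (∀ j, 0 ≤ d j) ∧
        (∏ i ∈ Finset.Icc 2 L, (Polynomial.X - Polynomial.C (β i))) *
            ∏ i ∈ Finset.Icc k L, (Polynomial.X - Polynomial.C (β i)) =
          ∑ j ∈ Finset.range (2 * L - k + 1), Polynomial.C (d j) * P j) := by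
  have hpos := ell_pos n b hn
  have hP' : ∀ k, (P k).Monic ∧ (P k).natDegree = k ∧
      ∀ q : ℝ[X], q.natDegree < k → ell n b hn (P k * q) = 0 := by
    intro k
    obtain ⟨h1, h2, h3⟩ := hP k
    refine ⟨h1, h2, fun q hq => ?_⟩
    have h := h3 q hq
    change ∫ t in Set.Ioo (-1 : ℝ) 1, (P k * q).eval t * vw n 1 b t = 0
    simpa only [eval_mul] using h
  have hlam : (1 : ℝ) ≤ (n : ℝ) / 2 := by
    have : (2 : ℝ) ≤ n := by exact_mod_cast hn
    linarith
  obtain ⟨hP0, hP1, hrec⟩ := jacobi_rec hlam hb hpos (ell_pearson n b hn) hP'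
  obtain ⟨M, rfl⟩ : ∃ M, L = M + 2 := ⟨L - 2, by omega⟩
  set Q : ℝ[X] := ∏ i ∈ Finset.Icc 1 (M + 2), (X - C (β i)) with hQ
  have hQmon : Q.Monic := monic_prod_of_monic _ _ fun i _ => monic_X_sub_C _
  have hQdeg : Q.natDegree = M + 2 := by
    rw [hQ, natDegree_prod_of_monic _ _ fun i _ => monic_X_sub_C _]
    simp
  -- Orthogonality up to degree `L - 2` means `Π_L = P_L + α P_{L-1}`.
  obtain ⟨α, hα⟩ : ∃ α : ℝ, Q = P (M + 2) + C α * P (M + 1) := by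
    have h := eq_C_mul_of_orth hpos hP' (f := Q - P (M + 2)) (k := M + 1) ?_ ?_
    · exact ⟨_, by rw [← h]; ring⟩
    · rw [natDegree_le_iff_coeff_eq_zero]
      intro m hm
      have e1 := hQmon.coeff_natDegree
      have e2 := (hP' (M + 2)).1.coeff_natDegree
      rw [hQdeg] at e1
      rw [(hP' (M + 2)).2.1] at e2
      rw [coeff_sub]
      rcases (show m = M + 2 ∨ M + 2 < m by omega) with rfl | h
      · rw [e1, e2, sub_self]
      · rw [coeff_eq_zero_of_natDegree_lt (by omega),
          coeff_eq_zero_of_natDegree_lt (by rw [(hP' (M + 2)).2.1]; exact h), sub_self]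
    · intro q hq
      have hQq : ell n b hn (Q * q) = 0 := by
        have h := horth q (by omega)
        change ∫ t in Set.Ioo (-1 : ℝ) 1, (Q * q).eval t * vw n 1 b t = 0
        simpa only [eval_mul] using h
      rw [sub_mul, map_sub, hQq, (hP' (M + 2)).2.2 q (by omega), sub_zero]
  set B := recB ((n : ℝ) / 2) b with hB
  set A := recA ((n : ℝ) / 2) b with hA
  -- Replacing `P_L` by `Π_L` only changes the last diagonal recurrence coefficient.
  set p := Function.update P (M + 2) Q with hp
  have hpP : ∀ j, j < M + 2 → p j = P j := fun j hj => Function.update_of_ne (by omega) _ _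
  have hpL : p (M + 2) = Q := Function.update_self _ _ _
  have hcone : ∀ m < M + 2, InCone P m (∏ i ∈ Finset.range m, (X - C (β (M + 2 - i)))) := by
    intro m hm
    refine InCone.trans (q := p) ?_ fun j hj => by
      rw [hpP j (by omega)]; exact InCone.self P j
    refine inCone_prod_range (M + 2) p A (Function.update B (M + 1) (B (M + 1) - α))
      (fun i => β (M + 2 - i)) ?_ ?_ ?_ ?_ ?_ ?_ ?_ m hm
    · rw [hpP 0 (by omega), hP0]
    · intro j hj
      rcases hj.lt_or_eq with h | rfl
      · rw [hpP j h]; exact ⟨(hP' j).1, (hP' j).2.1⟩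
      · rw [hpL]; exact ⟨hQmon, hQdeg⟩
    · intro _
      rw [hpP 1 (by omega), hP1, Function.update_of_ne (by omega)]
    · intro j hj
      rw [hpP (j + 1) (by omega), hpP j (by omega)]
      rcases (show j < M ∨ j = M by omega) with h | rfl
      · rw [hpP (j + 2) (by omega), Function.update_of_ne (by omega), hrec j]
      · rw [hpL, Function.update_self, hα, hrec j, C_sub]; ring
    · intro j _; exact recA_pos hlam b j
    · rw [hpL, hQ, prod_Icc_eq_range β 1 (M + 2) (by omega)]; rfl
    · intro i j hij hj
      exact hβmono _ (by rw [Finset.mem_Icc]; omega) _ (by rw [Finset.mem_Icc]; omega) (by omega)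
  have hmul := askey P A B hP0 hP1 hrec (fun j => (recA_pos hlam b j).le)
    (recA_mono hlam b) (recB_mono hlam b)
  intro k hk
  rw [Finset.mem_Icc] at hk
  have hFk : InCone P (M + 2 - k + 1) (∏ i ∈ Finset.Icc k (M + 2), (X - C (β i))) := by
    rw [prod_Icc_eq_range β k (M + 2) hk.2]
    exact hcone _ (by omega)
  have hF2 : InCone P (M + 1) (∏ i ∈ Finset.Icc 2 (M + 2), (X - C (β i))) := by
    rw [prod_Icc_eq_range β 2 (M + 2) (by omega)]
    exact hcone _ (by omega)
  have hmulk := InCone.mul hmul hF2 hFk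
  rw [show M + 1 + (M + 2 - k + 1) = 2 * (M + 2) - k by omega] at hmulk
  exact ⟨hFk, hmulk⟩
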